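/- arXiv:1112.4352 — 2 statements merged into one kernel-verified Lean document; each statement's English description precedes it below -/
import Mathlib

section
/- For all real x ≥ 0, the derivative of the function x ↦ √x · coth(√x) satisfies 0 ≤ (√x coth √x)' ≤ 1/3. -/
open Real

noncomputable def sqrtCoth (x : ℝ) : ℝ :=
  if x = 0 then 1 else Real.sqrt x * Real.cosh (Real.sqrt x) / Real.sinh (Real.sqrt x)

/-!
For `0 < x` and `t = 2√x`, the half-angle formulas turn the derivative into
`(sinh t - t) / (t (cosh t - 1))`. It is nonnegative because `t ≤ sinh t`, and the bound `1/3` is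
exactly the hyperbolic Cusa–Huygens inequality `3 sinh t ≤ t (cosh t + 2)`, which after one
differentiation and a half-angle substitution reduces to `sinh u ≤ u cosh u`. At `0` the difference
quotient is `((s cosh s - sinh s) / s³) / (sinh s / s)` with `s = √x`, whose limit follows from
l'Hôpital's rule.
-/

open Filter Topology

theorem hasDerivAt_mul_cosh_sub_sinh (s : ℝ) :
    HasDerivAt (fun s ↦ s * cosh s - sinh s) (s * sinh s) s :=
  (((hasDerivAt_id' s).mul (hasDerivAt_cosh s)).sub (hasDerivAt_sinh s)).congr_deriv (by ring)

theorem sinh_le_mul_cosh {s : ℝ} (hs : 0 ≤ s) : sinh s ≤ s * cosh s := by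
  have hmono : Monotone fun s ↦ s * cosh s - sinh s :=
    monotone_of_hasDerivAt_nonneg hasDerivAt_mul_cosh_sub_sinh fun u ↦ by
      rcases le_total 0 u with hu | hu
      · exact mul_nonneg hu (sinh_nonneg_iff.2 hu)
      · exact mul_nonneg_of_nonpos_of_nonpos hu (sinh_nonpos_iff.2 hu)
  simpa using hmono hs

theorem two_mul_cosh_sub_one_le_mul_sinh (t : ℝ) : 2 * (cosh t - 1) ≤ t * sinh t := by
  wlog ht : 0 ≤ t
  · simpa using this (-t) (by linarith)
  obtain ⟨u, rfl⟩ : ∃ u, t = 2 * u := ⟨t / 2, by ring⟩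
  have hu : 0 ≤ u := by linarith
  have hsinh : 0 ≤ sinh u := sinh_nonneg_iff.2 hu
  rw [cosh_two_mul, sinh_two_mul, cosh_sq]
  linarith [mul_le_mul_of_nonneg_left (sinh_le_mul_cosh hu) hsinh]

theorem three_mul_sinh_le_mul_cosh_add_two {t : ℝ} (ht : 0 ≤ t) :
    3 * sinh t ≤ t * (cosh t + 2) := by
  have hderiv (u : ℝ) : HasDerivAt (fun u ↦ u * (cosh u + 2) - 3 * sinh u)
      (u * sinh u - 2 * (cosh u - 1)) u :=
    (((hasDerivAt_id' u).mul ((hasDerivAt_cosh u).add_const 2)).sub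
      ((hasDerivAt_sinh u).const_mul 3)).congr_deriv (by ring)
  have hmono : Monotone fun u ↦ u * (cosh u + 2) - 3 * sinh u :=
    monotone_of_hasDerivAt_nonneg hderiv fun u ↦
      sub_nonneg.2 (two_mul_cosh_sub_one_le_mul_sinh u)
  simpa using hmono ht

theorem hasDerivAt_mul_cosh_div_sinh {s : ℝ} (hs : s ≠ 0) :
    HasDerivAt (fun s ↦ s * cosh s / sinh s)
      ((sinh (2 * s) - 2 * s) / (cosh (2 * s) - 1)) s := by
  have hsinh : sinh s ≠ 0 := sinh_ne_zero.2 hs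
  have hcosh : cosh (2 * s) - 1 = 2 * sinh s ^ 2 := by rw [cosh_two_mul, cosh_sq]; ring
  refine (((hasDerivAt_id' s).fun_mul (hasDerivAt_cosh s)).fun_div (hasDerivAt_sinh s)
    hsinh).congr_deriv ?_
  rw [hcosh, sinh_two_mul]
  field_simp
  linear_combination -s * cosh_sq s

theorem sqrtCoth_of_ne_zero {x : ℝ} (hx : x ≠ 0) : sqrtCoth x = √x * cosh √x / sinh √x :=
  if_neg hx

theorem sqrtCoth_zero : sqrtCoth 0 = 1 :=
  if_pos rfl

theorem hasDerivAt_sqrtCoth {x : ℝ} (hx : 0 < x) :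
    HasDerivAt sqrtCoth
      ((sinh (2 * √x) - 2 * √x) / (2 * √x * (cosh (2 * √x) - 1))) x := by
  have hsqrt : √x ≠ 0 := (sqrt_pos.2 hx).ne'
  have hcomp := (hasDerivAt_mul_cosh_div_sinh hsqrt).comp x (hasDerivAt_sqrt hx.ne')
  have heq : sqrtCoth =ᶠ[𝓝 x] (fun s ↦ s * cosh s / sinh s) ∘ sqrt :=
    (eventually_ne_nhds hx.ne').mono fun _ ↦ sqrtCoth_of_ne_zero
  exact (hcomp.congr_of_eventuallyEq heq).congr_deriv (by field_simp)

theorem tendsto_sinh_div_self : Tendsto (fun s : ℝ ↦ sinh s / s) (𝓝[≠] 0) (𝓝 1) := by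
  simpa [div_eq_inv_mul] using (hasDerivAt_sinh 0).tendsto_slope_zero

theorem tendsto_mul_cosh_sub_sinh_div_cube :
    Tendsto (fun s : ℝ ↦ (s * cosh s - sinh s) / s ^ 3) (𝓝[≠] 0) (𝓝 (1 / 3)) := by
  have hpow (s : ℝ) : HasDerivAt (fun s : ℝ ↦ s ^ 3) (3 * s ^ 2) s := by
    simpa using hasDerivAt_pow 3 s
  have hlim {f : ℝ → ℝ} {f' : ℝ} (hf : HasDerivAt f f' 0) (hf₀ : f 0 = 0) :
      Tendsto f (𝓝[≠] 0) (𝓝 0) := by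
    simpa only [hf₀] using hf.continuousAt.tendsto.mono_left nhdsWithin_le_nhds
  have hquot : Tendsto (fun s : ℝ ↦ s * sinh s / (3 * s ^ 2)) (𝓝[≠] 0) (𝓝 (1 / 3)) := by
    refine (tendsto_sinh_div_self.div_const 3).congr' ?_
    filter_upwards [self_mem_nhdsWithin] with s hs
    have hs : s ≠ 0 := hs
    field_simp
  refine HasDerivAt.lhopital_zero_nhdsNE (.of_forall hasDerivAt_mul_cosh_sub_sinh)
    (.of_forall hpow) ?_ (hlim (hasDerivAt_mul_cosh_sub_sinh 0) (by simp))
    (hlim (hpow 0) (by simp)) hquot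
  filter_upwards [self_mem_nhdsWithin] with s hs
  exact mul_ne_zero three_ne_zero (pow_ne_zero 2 hs)

theorem slope_sqrtCoth_zero {x : ℝ} (hx : 0 < x) :
    slope sqrtCoth 0 x = (√x * cosh √x - sinh √x) / √x ^ 3 / (sinh √x / √x) := by
  obtain ⟨s, hs, rfl⟩ : ∃ s, 0 < s ∧ x = s ^ 2 := ⟨√x, sqrt_pos.2 hx, (sq_sqrt hx.le).symm⟩
  have hsinh : sinh s ≠ 0 := sinh_ne_zero.2 hs.ne'
  rw [slope_def_field, sqrtCoth_of_ne_zero hx.ne', sqrtCoth_zero, sub_zero, sqrt_sq hs.le]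
  field_simp

theorem hasDerivWithinAt_sqrtCoth_zero : HasDerivWithinAt sqrtCoth (1 / 3) (Set.Ici 0) 0 := by
  rw [hasDerivWithinAt_iff_tendsto_slope, Set.Ici_sdiff_left]
  have hsqrt : Tendsto sqrt (𝓝[>] 0) (𝓝[≠] 0) := by
    refine tendsto_nhdsWithin_iff.2 ⟨?_, ?_⟩
    · simpa using (continuous_sqrt.tendsto 0).mono_left nhdsWithin_le_nhds
    · filter_upwards [self_mem_nhdsWithin] with x hx using (sqrt_pos.2 hx).ne'
  have hlim : Tendsto (fun s : ℝ ↦ (s * cosh s - sinh s) / s ^ 3 / (sinh s / s)) (𝓝[≠] 0)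
      (𝓝 (1 / 3)) := by
    simpa only [Pi.div_def, div_one] using
      tendsto_mul_cosh_sub_sinh_div_cube.div tendsto_sinh_div_self one_ne_zero
  refine (hlim.comp hsqrt).congr' ?_
  filter_upwards [self_mem_nhdsWithin] with x hx using (slope_sqrtCoth_zero hx).symm

theorem deriv_sqrt_coth_sqrt_bounds :
    ∀ x : ℝ, 0 ≤ x →
      ∃ d : ℝ, HasDerivWithinAt sqrtCoth d (Set.Ici 0) x ∧ 0 ≤ d ∧ d ≤ 1/3 := by
  intro x hx
  rcases hx.eq_or_lt with rfl | hx
  · exact ⟨1 / 3, hasDerivWithinAt_sqrtCoth_zero, by norm_num, le_rfl⟩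
  refine ⟨_, (hasDerivAt_sqrtCoth hx).hasDerivWithinAt, ?_⟩
  have ht : 0 < 2 * √x := by positivity
  generalize 2 * √x = t at ht ⊢
  have hden : 0 < t * (cosh t - 1) := mul_pos ht (sub_pos.2 (one_lt_cosh.2 ht.ne'))
  constructor
  · exact div_nonneg (sub_nonneg.2 (self_le_sinh_iff.2 ht.le)) hden.le
  · rw [div_le_iff₀ hden]
    linarith [three_mul_sinh_le_mul_cosh_add_two ht.le]
end

section
/- Let l be a twice differentiable nondecreasing real function on (-∞, T) satisfying l''(t) + c e^{2t} l'(t) ≥ 0 with c > 0. Then for all t₂ < t₁ with t₁ + log 2 < T, (c/2)·4·e^{2t₁} < 1, and all 0 ≤ h ≤ log 2: l(t₂+h) - l(t₂) ≤ (1 + 4c·e^{2t₁})·(l(t₁+h) - l(t₁)). -/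
/-!
If `A' = a` and `u' + a u ≥ 0`, then `exp A * u` is nondecreasing, so
`u x ≤ exp (A y - A x) * u y` for `x ≤ y`. For `u = l'` this compares the derivatives of `l` at
`t₂ + s` and `t₁ + s`; a bound `K` on the exponential factor, uniform in `s ∈ [0, h]`, passes to the
increments of `l` upon integrating in `s`. Here `A t = (c / 2) * exp (2 * t)`, the shift
`s ≤ log 2` costs a factor `4` in `exp (2 * t)`, and `exp x ≤ 1 + 2 * x` on `[0, 1]` gives `K`.
-/

open Set

theorem sub_le_sub_of_hasDerivAt_le {f f' g g' : ℝ → ℝ} {a b : ℝ} (hab : a ≤ b)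
    (hf : ∀ x ∈ Icc a b, HasDerivAt f (f' x) x) (hg : ∀ x ∈ Icc a b, HasDerivAt g (g' x) x)
    (hle : ∀ x ∈ Icc a b, f' x ≤ g' x) : f b - f a ≤ g b - g a := by
  have hderiv : ∀ x ∈ Icc a b, HasDerivAt (g - f) (g' x - f' x) x :=
    fun x hx ↦ (hg x hx).sub (hf x hx)
  have hmono : MonotoneOn (g - f) (Icc a b) :=
    monotoneOn_of_hasDerivWithinAt_nonneg (convex_Icc a b) (HasDerivAt.continuousOn hderiv)
      (fun x hx ↦ (hderiv x (interior_subset hx)).hasDerivWithinAt)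
      (fun x hx ↦ sub_nonneg.2 (hle x (interior_subset hx)))
  have hends : (g - f) a ≤ (g - f) b :=
    hmono (left_mem_Icc.2 hab) (right_mem_Icc.2 hab) hab
  simp only [Pi.sub_apply] at hends
  linarith

section IntegratingFactor

variable {u u' A a : ℝ → ℝ} {s : Set ℝ}

theorem monotoneOn_exp_mul_of_deriv_add_mul_nonneg (hs : Convex ℝ s)
    (hA : ∀ t ∈ s, HasDerivAt A (a t) t) (hu : ∀ t ∈ s, HasDerivAt u (u' t) t)
    (hineq : ∀ t ∈ s, 0 ≤ u' t + a t * u t) :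
    MonotoneOn (fun t ↦ Real.exp (A t) * u t) s := by
  have hderiv : ∀ t ∈ s, HasDerivAt (fun t ↦ Real.exp (A t) * u t)
      (Real.exp (A t) * (u' t + a t * u t)) t := fun t ht ↦
    ((hA t ht).exp.mul (hu t ht)).congr_deriv (by ring)
  exact monotoneOn_of_hasDerivWithinAt_nonneg hs (HasDerivAt.continuousOn hderiv)
    (fun t ht ↦ (hderiv t (interior_subset ht)).hasDerivWithinAt)
    (fun t ht ↦ mul_nonneg (Real.exp_nonneg _) (hineq t (interior_subset ht)))

theorem le_exp_sub_mul_of_deriv_add_mul_nonneg (hs : Convex ℝ s)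
    (hA : ∀ t ∈ s, HasDerivAt A (a t) t) (hu : ∀ t ∈ s, HasDerivAt u (u' t) t)
    (hineq : ∀ t ∈ s, 0 ≤ u' t + a t * u t) {x y : ℝ} (hx : x ∈ s) (hy : y ∈ s) (hxy : x ≤ y) :
    u x ≤ Real.exp (A y - A x) * u y := by
  have hmono : Real.exp (A x) * u x ≤ Real.exp (A y) * u y :=
    monotoneOn_exp_mul_of_deriv_add_mul_nonneg hs hA hu hineq hx hy hxy
  rwa [Real.exp_sub, div_mul_eq_mul_div, le_div_iff₀' (Real.exp_pos _)]

end IntegratingFactor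

theorem hasDerivAt_half_mul_exp_two_mul (c t : ℝ) :
    HasDerivAt (fun t ↦ c / 2 * Real.exp (2 * t)) (c * Real.exp (2 * t)) t :=
  ((hasDerivAt_const_mul (2 : ℝ)).exp.const_mul (c / 2)).congr_deriv (by ring)

theorem exp_le_one_add_two_mul {x : ℝ} (h0 : 0 ≤ x) (h1 : x ≤ 1) : Real.exp x ≤ 1 + 2 * x := by
  have habs := Real.abs_exp_sub_one_le ((abs_of_nonneg h0).trans_le h1)
  rw [abs_of_nonneg h0] at habs
  linarith [le_abs_self (Real.exp x - 1)]

theorem exp_two_mul_add_le_of_le_log {r h : ℝ} (hr : 0 < r) (hh : h ≤ Real.log r) (t : ℝ) :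
    Real.exp (2 * (t + h)) ≤ r ^ 2 * Real.exp (2 * t) := by
  calc
    Real.exp (2 * (t + h)) = Real.exp h ^ 2 * Real.exp (2 * t) := by
      rw [← Real.exp_nat_mul, ← Real.exp_add]
      push_cast
      ring_nf
    _ ≤ r ^ 2 * Real.exp (2 * t) := by
      gcongr
      exact (Real.le_log_iff_exp_le hr).1 hh

theorem exp_half_mul_exp_sub_le {c s t : ℝ} (hc : 0 ≤ c) (hs : s ≤ Real.log 2)
    (hsmall : c / 2 * 4 * Real.exp (2 * t) ≤ 1) (x : ℝ) :
    Real.exp (c / 2 * Real.exp (2 * (t + s)) - c / 2 * Real.exp (2 * x)) ≤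
      1 + 4 * c * Real.exp (2 * t) := by
  have hquad : Real.exp (2 * (t + s)) ≤ 2 ^ 2 * Real.exp (2 * t) :=
    exp_two_mul_add_le_of_le_log two_pos hs t
  have hexponent : c / 2 * Real.exp (2 * (t + s)) - c / 2 * Real.exp (2 * x) ≤
      c / 2 * 4 * Real.exp (2 * t) := by
    calc
      _ ≤ c / 2 * Real.exp (2 * (t + s)) := sub_le_self _ (by positivity)
      _ ≤ c / 2 * (2 ^ 2 * Real.exp (2 * t)) := by gcongr
      _ = c / 2 * 4 * Real.exp (2 * t) := by ring
  calc
    _ ≤ Real.exp (c / 2 * 4 * Real.exp (2 * t)) := Real.exp_le_exp.2 hexponent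
    _ ≤ 1 + 2 * (c / 2 * 4 * Real.exp (2 * t)) := exp_le_one_add_two_mul (by positivity) hsmall
    _ = 1 + 4 * c * Real.exp (2 * t) := by ring

theorem integrated_doubling_estimate_general {l l' l'' A a : ℝ → ℝ} {t₂ t₁ h K : ℝ}
    (h21 : t₂ ≤ t₁) (h0 : 0 ≤ h)
    (hl : ∀ t ∈ Icc t₂ (t₁ + h), HasDerivAt l (l' t) t)
    (hl' : ∀ t ∈ Icc t₂ (t₁ + h), HasDerivAt l' (l'' t) t)
    (hl'_nonneg : ∀ t ∈ Icc t₁ (t₁ + h), 0 ≤ l' t)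
    (hA : ∀ t ∈ Icc t₂ (t₁ + h), HasDerivAt A (a t) t)
    (hineq : ∀ t ∈ Icc t₂ (t₁ + h), 0 ≤ l'' t + a t * l' t)
    (hK : ∀ s ∈ Icc 0 h, Real.exp (A (t₁ + s) - A (t₂ + s)) ≤ K) :
    l (t₂ + h) - l t₂ ≤ K * (l (t₁ + h) - l t₁) := by
  have hmem₁ : ∀ s ∈ Icc 0 h, t₁ + s ∈ Icc t₂ (t₁ + h) := fun s hs ↦
    ⟨by linarith [hs.1], by linarith [hs.2]⟩
  have hmem₂ : ∀ s ∈ Icc 0 h, t₂ + s ∈ Icc t₂ (t₁ + h) := fun s hs ↦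
    ⟨by linarith [hs.1], by linarith [hs.2]⟩
  have hderiv_le : ∀ s ∈ Icc 0 h, l' (t₂ + s) ≤ K * l' (t₁ + s) := by
    intro s hs
    calc
      l' (t₂ + s) ≤ Real.exp (A (t₁ + s) - A (t₂ + s)) * l' (t₁ + s) :=
        le_exp_sub_mul_of_deriv_add_mul_nonneg (convex_Icc _ _) hA hl' hineq
          (hmem₂ s hs) (hmem₁ s hs) (by linarith)
      _ ≤ K * l' (t₁ + s) :=
        mul_le_mul_of_nonneg_right (hK s hs)
          (hl'_nonneg _ ⟨by linarith [hs.1], (hmem₁ s hs).2⟩)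
  have hincrement := sub_le_sub_of_hasDerivAt_le h0
    (fun s hs ↦ (hl _ (hmem₂ s hs)).comp_const_add t₂ s)
    (fun s hs ↦ ((hl _ (hmem₁ s hs)).comp_const_add t₁ s).const_mul K) hderiv_le
  simpa only [add_zero, ← mul_sub] using hincrement

theorem integrated_doubling_estimate
    (T c : ℝ) (hc : 0 < c) (l l' l'' : ℝ → ℝ)
    (hl : ∀ t < T, HasDerivAt l (l' t) t)
    (hl' : ∀ t < T, HasDerivAt l' (l'' t) t)
    (hl'_nonneg : ∀ t < T, 0 ≤ l' t)
    (hineq : ∀ t < T, l'' t + c * Real.exp (2 * t) * l' t ≥ 0) :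
    ∀ t₂ t₁ h : ℝ, t₂ < t₁ → t₁ + Real.log 2 < T →
      (c / 2) * 4 * Real.exp (2 * t₁) < 1 → 0 ≤ h → h ≤ Real.log 2 →
      l (t₂ + h) - l t₂ ≤ (1 + 4 * c * Real.exp (2 * t₁)) * (l (t₁ + h) - l t₁) := by
  intro t₂ t₁ h h21 hT hsmall h0 hlog
  have hlt : ∀ t, t ≤ t₁ + h → t < T := fun t ht ↦ by linarith
  exact integrated_doubling_estimate_general h21.le h0 (fun t ht ↦ hl t (hlt t ht.2))
    (fun t ht ↦ hl' t (hlt t ht.2)) (fun t ht ↦ hl'_nonneg t (hlt t ht.2))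
    (fun t _ ↦ hasDerivAt_half_mul_exp_two_mul c t) (fun t ht ↦ hineq t (hlt t ht.2))
    (fun s hs ↦ exp_half_mul_exp_sub_le hc.le (hs.2.trans hlog) hsmall.le (t₂ + s))
end
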